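/- arXiv:2105.03603 — 3 statements merged into one kernel-verified Lean document; each statement's English description precedes it below -/
import Mathlib

section
/- Let S be a nonempty finite set and let P be a row-stochastic matrix on S. Suppose there is a probability vector μ on S with μ(j) > 0 for every j ∈ S such that for all i, j ∈ S, P^d(j|i) → μ(j) as d → ∞. Then there exists ε* ∈ (0,1) such that for every integer d ≥ 1 and all i, j ∈ S: if P^d(j|i) > 0 then P^d(j|i) ≥ ε*. (That is, every ergodic transition probability matrix admits a uniform positive lower bound, over all powers d, on its nonzero entries.) -/
/-! A sequence with a limit above `c` stays above some `b > c` outside a finite set of indices, and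
each of the finitely many remaining terms that exceed `c` bounds only itself. Asking for a bound
that holds for all `ε` close enough to `c` from the right, rather than for a particular `ε`, makes
the minimum over finitely many constraints an intersection of finitely many neighbourhoods. -/

open Filter Topology

section OrderTopology

variable {ι α : Type*} [LinearOrder α] [TopologicalSpace α] [OrderTopology α]
  {u : ι → α} {a b c : α}

theorem eventually_nhdsGT_forall_lt_imp_le_of_eventually_cofinite_ge (hcb : c < b)
    (hu : ∀ᶠ n in cofinite, b ≤ u n) : ∀ᶠ ε in 𝓝[>] c, ∀ n, c < u n → ε ≤ u n := by
  have le_of_gt {x : α} (hx : c < x) : ∀ᶠ ε in 𝓝[>] c, ε ≤ x :=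
    (eventually_le_nhds hx).filter_mono nhdsWithin_le_nhds
  have le_exceptional : ∀ᶠ ε in 𝓝[>] c, ∀ n ∈ {n | ¬b ≤ u n}, c < u n → ε ≤ u n :=
    (eventually_all_finite hu).2 fun _ _ ↦ eventually_imp_distrib_left.2 le_of_gt
  filter_upwards [le_exceptional, le_of_gt hcb] with ε hε hεb n hn
  by_cases hbn : b ≤ u n
  · exact hεb.trans hbn
  · exact hε n hbn hn

theorem eventually_nhdsGT_forall_lt_imp_le_of_tendsto_cofinite [DenselyOrdered α] (hca : c < a)
    (hu : Tendsto u cofinite (𝓝 a)) : ∀ᶠ ε in 𝓝[>] c, ∀ n, c < u n → ε ≤ u n := by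
  obtain ⟨b, hcb, hba⟩ := exists_between hca
  exact eventually_nhdsGT_forall_lt_imp_le_of_eventually_cofinite_ge hcb
    (hu.eventually_const_le hba)

end OrderTopology

theorem ergodic_matrix_uniform_lower_bound_general {S R : Type*} [Fintype S] [DecidableEq S]
    [Semiring R] [LinearOrder R] [IsStrictOrderedRing R] [DenselyOrdered R]
    [TopologicalSpace R] [OrderTopology R] (P : Matrix S S R) (L : S → S → R)
    (hLpos : ∀ i j, 0 < L i j)
    (hconv : ∀ i j, Tendsto (fun d : ℕ ↦ (P ^ d) i j) atTop (𝓝 (L i j))) :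
    ∃ ε ∈ Set.Ioo (0 : R) 1, ∀ (d : ℕ) (i j), 0 < (P ^ d) i j → ε ≤ (P ^ d) i j := by
  have le_entries : ∀ᶠ ε in 𝓝[>] (0 : R), ∀ i j, ∀ d : ℕ, 0 < (P ^ d) i j → ε ≤ (P ^ d) i j :=
    eventually_all.2 fun i ↦ eventually_all.2 fun j ↦
      eventually_nhdsGT_forall_lt_imp_le_of_tendsto_cofinite (hLpos i j)
        (Nat.cofinite_eq_atTop ▸ hconv i j)
  have mem_Ioo : ∀ᶠ ε in 𝓝[>] (0 : R), ε ∈ Set.Ioo 0 1 := Ioo_mem_nhdsGT zero_lt_one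
  obtain ⟨ε, hε, hle⟩ := (mem_Ioo.and le_entries).exists
  exact ⟨ε, hε, fun d i j ↦ hle i j d⟩

/-- Let `P` be a row-stochastic matrix on a nonempty finite set `S` such that
the entries of the powers `P^d` converge, as `d → ∞`, to a strictly positive probability
vector `μ` (independently of the row). Then there is a uniform `ε* ∈ (0,1)` bounding from
below all nonzero entries of all powers `P^d`, `d ≥ 1`. Here `(P ^ d) i j` is the
`(i,j)`-th entry of the `d`-th matrix power, i.e. `P^d(j|i)`. -/
theorem ergodic_matrix_uniform_lower_bound {S : Type*} [Fintype S] [DecidableEq S] [Nonempty S]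
    (P : Matrix S S ℝ)
    (hnonneg : ∀ i j, 0 ≤ P i j) (hrow : ∀ i, ∑ j, P i j = 1)
    (μ : S → ℝ) (hμnonneg : ∀ j, 0 ≤ μ j) (hμsum : ∑ j, μ j = 1)
    (hμpos : ∀ j, 0 < μ j)
    (hconv : ∀ i j, Filter.Tendsto (fun d : ℕ => (P ^ d) i j) Filter.atTop (nhds (μ j))) :
    ∃ εstar : ℝ, εstar ∈ Set.Ioo (0 : ℝ) 1 ∧
      ∀ d : ℕ, 1 ≤ d → ∀ i j, 0 < (P ^ d) i j → εstar ≤ (P ^ d) i j := by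
  obtain ⟨ε, hε, hle⟩ :=
    ergodic_matrix_uniform_lower_bound_general P (fun _ ↦ μ) (fun _ ↦ hμpos) hconv
  exact ⟨ε, hε, fun d _ ↦ hle d⟩
end

section
/- Fix a nonempty finite set S, an integer K ≥ 3, and η ∈ (0,1]. Let C = (h, P₁, P₂) and C′ = (h′, P₁′, P₂′) be two arms configurations (so P₁ ≠ P₂ and P₁′ ≠ P₂′) with C ≠ C′ as triples (they differ in at least one component). Then there exists a state (d̄, ī) — a vector d̄ of positive-integer delays and a vector ī ∈ S^K of last observed states — such that for every arm b ∈ {1,…,K}, the transition probability functions (d̄′, ī′) ↦ Q_C(d̄′, ī′ | d̄, ī, b) and (d̄′, ī′) ↦ Q_{C′}(d̄′, ī′ | d̄, ī, b) are not identical. -/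
open Matrix

/-- A row-stochastic matrix on a finite set `S`: nonnegative entries, rows summing to 1. -/
def RowStochastic {S : Type*} [Fintype S] (P : Matrix S S ℝ) : Prop :=
  (∀ i j, 0 ≤ P i j) ∧ ∀ i, ∑ j, P i j = 1

/-- The transition probability matrix of arm `a` under the arms configuration
`C = (h, P₁, P₂)`: `P₁` if `a = h`, and `P₂` otherwise. -/
def armMatrix {S : Type*} {K : ℕ} (h : Fin K) (P₁ P₂ : Matrix S S ℝ) :
    Fin K → Matrix S S ℝ :=
  fun a => if a = h then P₁ else P₂

open scoped Classical in
/-- The transition probability `Q_C(d̄′, ī′ | d̄, ī, b)` of the countable-state controlled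
Markov process of delays and last observed states:
`∑ a (η/K + (1−η)·1{a=b}) · (P_C^a)^{d_a}(i′_a | i_a) ·
  1{d′_a = 1 ∧ ∀ ã ≠ a, d′_ã = d_ã + 1} · 1{∀ ã ≠ a, i′_ã = i_ã}`,
where `PC a` is the transition matrix of arm `a` and `((PC a) ^ d) i j = (P_C^a)^d(j|i)`. -/
noncomputable def Qtrans {S : Type*} [Fintype S] [DecidableEq S] {K : ℕ}
    (η : ℝ) (PC : Fin K → Matrix S S ℝ)
    (db : Fin K → ℕ) (ib : Fin K → S) (b : Fin K)
    (db' : Fin K → ℕ) (ib' : Fin K → S) : ℝ :=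
  ∑ a : Fin K,
    (η / K + (1 - η) * (if a = b then 1 else 0)) *
      ((PC a) ^ (db a)) (ib a) (ib' a) *
      (if db' a = 1 ∧ ∀ c : Fin K, c ≠ a → db' c = db c + 1 then 1 else 0) *
      (if ∀ c : Fin K, c ≠ a → ib' c = ib c then 1 else 0)

/-!
A successor state in which the delay of arm `a` is `1` and all other delays have grown by one
receives mass from the `a`-th summand of `Q_C` only, with a positive weight whichever arm `b` is
intended. Starting from delays all equal to `1`, the transition function therefore determines every
entry of every arm matrix, and two configurations can only be confused if they assign the same
matrix to each arm. With at least three arms, some arm is special in neither configuration; it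
reveals `P₂`, after which `P₁ ≠ P₂` locates `h` and hence `P₁`.
-/

section ArmMatrix

variable {S : Type*} {K : ℕ} {h h' a : Fin K} {P₁ P₂ P₁' P₂' : Matrix S S ℝ}

theorem armMatrix_self (h : Fin K) (P₁ P₂ : Matrix S S ℝ) : armMatrix h P₁ P₂ h = P₁ :=
  if_pos rfl

theorem armMatrix_of_ne (ha : a ≠ h) (P₁ P₂ : Matrix S S ℝ) : armMatrix h P₁ P₂ a = P₂ :=
  if_neg ha

theorem armMatrix_inj (hK : 3 ≤ K) (hC : P₁ ≠ P₂) :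
    armMatrix h P₁ P₂ = armMatrix h' P₁' P₂' ↔ h = h' ∧ P₁ = P₁' ∧ P₂ = P₂' := by
  refine ⟨fun heq => ?_, fun ⟨hh, h₁, h₂⟩ => by rw [hh, h₁, h₂]⟩
  obtain ⟨c, hch, hch'⟩ : ∃ c, c ≠ h ∧ c ≠ h' :=
    Fin.exists_ne_and_ne_of_two_lt h h' hK
  have h₂ : P₂ = P₂' := by
    rw [← armMatrix_of_ne hch P₁ P₂, heq, armMatrix_of_ne hch']
  have hh : h = h' := by
    by_contra hne
    apply hC
    rw [← armMatrix_self h P₁ P₂, heq, armMatrix_of_ne hne, h₂]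
  have h₁ : P₁ = P₁' := by
    rw [← armMatrix_self h P₁ P₂, heq, hh, armMatrix_self]
  exact ⟨hh, h₁, h₂⟩

end ArmMatrix

section Transition

variable {K : ℕ}

/-- The probability with which arm `a` is pulled by a trembling hand of parameter `η` that
intends to pull arm `b`. -/
noncomputable def pullProb (η : ℝ) (b a : Fin K) : ℝ :=
  η / K + (1 - η) * (if a = b then 1 else 0)

theorem pullProb_pos {η : ℝ} (hη : η ∈ Set.Ioc (0 : ℝ) 1) (b a : Fin K) : 0 < pullProb η b a := by
  have hK : (0 : ℝ) < K := Nat.cast_pos.mpr a.pos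
  have hindicator : (0 : ℝ) ≤ if a = b then 1 else 0 := by split_ifs <;> norm_num
  exact add_pos_of_pos_of_nonneg (div_pos hη.1 hK)
    (mul_nonneg (sub_nonneg.mpr hη.2) hindicator)

/-- The vector of delays that follows `db` once arm `a` has been pulled. -/
def delaysAfterPull (db : Fin K → ℕ) (a : Fin K) : Fin K → ℕ :=
  Function.update (fun c => db c + 1) a 1

theorem delaysAfterPull_self (db : Fin K → ℕ) (a : Fin K) : delaysAfterPull db a a = 1 :=
  Function.update_self ..

theorem delaysAfterPull_of_ne (db : Fin K → ℕ) {a c : Fin K} (hc : c ≠ a) :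
    delaysAfterPull db a c = db c + 1 :=
  Function.update_of_ne hc ..

theorem one_le_delaysAfterPull (db : Fin K → ℕ) (a c : Fin K) : 1 ≤ delaysAfterPull db a c := by
  obtain rfl | hc := eq_or_ne c a
  · exact (delaysAfterPull_self db c).ge
  · exact (delaysAfterPull_of_ne db hc).symm ▸ Nat.le_add_left 1 (db c)

variable {S : Type*} [Fintype S] [DecidableEq S]

theorem Qtrans_delaysAfterPull (η : ℝ) (PC : Fin K → Matrix S S ℝ) {db : Fin K → ℕ}
    (hdb : ∀ c, 1 ≤ db c) (ib : Fin K → S) (a b : Fin K) (j : S) :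
    Qtrans η PC db ib b (delaysAfterPull db a) (Function.update ib a j) =
      pullProb η b a * (PC a ^ db a) (ib a) j := by
  rw [Qtrans, Finset.sum_eq_single_of_mem a (Finset.mem_univ a)]
  · have hdelays : delaysAfterPull db a a = 1 ∧ ∀ c, c ≠ a → delaysAfterPull db a c = db c + 1 :=
      ⟨delaysAfterPull_self db a, fun _ hc => delaysAfterPull_of_ne db hc⟩
    have hstates : ∀ c, c ≠ a → Function.update ib a j c = ib c :=
      fun _ hc => Function.update_of_ne hc ..
    rw [if_pos hdelays, if_pos hstates, mul_one, mul_one, Function.update_self, pullProb]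
  · intro c _ hc
    have hdelay : delaysAfterPull db a c ≠ 1 := by
      rw [delaysAfterPull_of_ne db hc]
      exact (Nat.lt_add_of_pos_left (hdb c)).ne'
    rw [if_neg (c := _ ∧ _) fun hdelays => hdelay hdelays.1, mul_zero, zero_mul]

theorem exists_forall_Qtrans_ne {η : ℝ} (hη : η ∈ Set.Ioc (0 : ℝ) 1)
    {PC PC' : Fin K → Matrix S S ℝ} (hPC : PC ≠ PC') :
    ∃ (db : Fin K → ℕ) (ib : Fin K → S) (db' : Fin K → ℕ) (ib' : Fin K → S),
      (∀ a, 1 ≤ db a) ∧ (∀ a, 1 ≤ db' a) ∧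
        ∀ b, Qtrans η PC db ib b db' ib' ≠ Qtrans η PC' db ib b db' ib' := by
  obtain ⟨a, ha⟩ := Function.ne_iff.mp hPC
  obtain ⟨i, hi⟩ := Function.ne_iff.mp ha
  obtain ⟨j, hij⟩ := Function.ne_iff.mp hi
  have hdb : ∀ c : Fin K, 1 ≤ (fun _ => 1 : Fin K → ℕ) c := fun _ => le_rfl
  refine ⟨fun _ => 1, fun _ => i, delaysAfterPull (fun _ => 1) a,
    Function.update (fun _ => i) a j, hdb, one_le_delaysAfterPull _ a, fun b heq => hij ?_⟩
  simp only [Qtrans_delaysAfterPull η _ hdb, pow_one] at heq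
  exact mul_left_cancel₀ (pullProb_pos hη b a).ne' heq

theorem mandl_identifiability_general (hK : 3 ≤ K) {η : ℝ} (hη : η ∈ Set.Ioc (0 : ℝ) 1)
    {h h' : Fin K} {P₁ P₂ P₁' P₂' : Matrix S S ℝ} (hC : P₁ ≠ P₂)
    (hdiff : ¬(h = h' ∧ P₁ = P₁' ∧ P₂ = P₂')) :
    ∃ (db : Fin K → ℕ) (ib : Fin K → S) (db' : Fin K → ℕ) (ib' : Fin K → S),
      (∀ a, 1 ≤ db a) ∧ (∀ a, 1 ≤ db' a) ∧
        ∀ b, Qtrans η (armMatrix h P₁ P₂) db ib b db' ib' ≠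
          Qtrans η (armMatrix h' P₁' P₂') db ib b db' ib' :=
  exists_forall_Qtrans_ne hη (mt (armMatrix_inj hK hC).mp hdiff)

end Transition

/-- Mandl-type identifiability: For any two distinct arms configurations
`C = (h, P₁, P₂)` and `C′ = (h′, P₁′, P₂′)` (row-stochastic, `P₁ ≠ P₂`, `P₁′ ≠ P₂′`,
differing in at least one component), there exists a state `(d̄, ī)` (positive delays)
such that for every arm `b`, the transition probability functions
`(d̄′, ī′) ↦ Q_C(d̄′, ī′ | d̄, ī, b)` and `(d̄′, ī′) ↦ Q_{C′}(d̄′, ī′ | d̄, ī, b)` are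
not identical on the state space. -/
theorem mandl_identifiability {S : Type*} [Fintype S] [DecidableEq S] [Nonempty S]
    (K : ℕ) (hK : 3 ≤ K) (η : ℝ) (hη : η ∈ Set.Ioc (0 : ℝ) 1)
    (h h' : Fin K) (P₁ P₂ P₁' P₂' : Matrix S S ℝ)
    (hP₁ : RowStochastic P₁) (hP₂ : RowStochastic P₂)
    (hP₁' : RowStochastic P₁') (hP₂' : RowStochastic P₂')
    (hC : P₁ ≠ P₂) (hC' : P₁' ≠ P₂')
    (hdiff : ¬(h = h' ∧ P₁ = P₁' ∧ P₂ = P₂')) :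
    ∃ (db : Fin K → ℕ) (ib : Fin K → S), (∀ a, 1 ≤ db a) ∧
      ∀ b : Fin K, ∃ (db' : Fin K → ℕ) (ib' : Fin K → S), (∀ a, 1 ≤ db' a) ∧
        Qtrans η (armMatrix h P₁ P₂) db ib b db' ib' ≠
          Qtrans η (armMatrix h' P₁' P₂') db ib b db' ib' := by
  obtain ⟨db, ib, db', ib', hdb, hdb', hne⟩ := mandl_identifiability_general hK hη hC hdiff
  exact ⟨db, ib, hdb, fun b => ⟨db', ib', hdb', hne b⟩⟩
end

section
/- Fix a nonempty finite set S, an integer K ≥ 3, η ∈ (0,1], and ε* ∈ (0,1). Let C = (h, P₁, P₂) be an arms configuration such that for every integer d ≥ 1 and all i, j ∈ S: if P₁^d(j|i) > 0 then P₁^d(j|i) ≥ ε*, and if P₂^d(j|i) > 0 then P₂^d(j|i) ≥ ε*. Then for all states (d̄, ī), (d̄′, ī′) and every arm b ∈ {1,…,K}: either Q_C(d̄′, ī′ | d̄, ī, b) = 0 or Q_C(d̄′, ī′ | d̄, ī, b) ≥ (η/K)·ε*. -/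
open Matrix

/-!
`Q_C` is a sum over the arms of products of four factors: the trembling-hand weight, which is at
least `η/K`; a matrix-power entry, which is `0` or at least `ε*`; and two indicators. The property
of being either zero or at least a nonnegative threshold passes to products (with the thresholds
multiplying) and to sums (with a common threshold).
-/

lemma mul_eq_zero_or_le {M : Type*} [MulZeroClass M] [Preorder M] [PosMulMono M] [MulPosMono M]
    {a b x y : M} (ha : 0 ≤ a) (hb : 0 ≤ b) (hx : x = 0 ∨ a ≤ x) (hy : y = 0 ∨ b ≤ y) :
    x * y = 0 ∨ a * b ≤ x * y := by
  rcases hx with rfl | hx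
  · exact Or.inl (zero_mul y)
  rcases hy with rfl | hy
  · exact Or.inl (mul_zero x)
  exact Or.inr (mul_le_mul hx hy hb (ha.trans hx))

lemma mul_ite_one_zero_eq_zero_or_le {M : Type*} [MulZeroOneClass M] [LE M] {p : Prop}
    [Decidable p] {c x : M} (hx : x = 0 ∨ c ≤ x) :
    x * (if p then 1 else 0) = 0 ∨ c ≤ x * (if p then 1 else 0) := by
  split_ifs
  · rwa [mul_one]
  · exact Or.inl (mul_zero x)

lemma sum_eq_zero_or_le {ι M : Type*} [AddCommMonoid M] [Preorder M] [AddLeftMono M]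
    {c : M} (hc : 0 ≤ c) {s : Finset ι} {f : ι → M} (hf : ∀ i ∈ s, f i = 0 ∨ c ≤ f i) :
    ∑ i ∈ s, f i = 0 ∨ c ≤ ∑ i ∈ s, f i := by
  by_cases hzero : ∀ i ∈ s, f i = 0
  · exact Or.inl (Finset.sum_eq_zero hzero)
  push Not at hzero
  obtain ⟨i, hi, hfi⟩ := hzero
  have hnonneg : ∀ j ∈ s, 0 ≤ f j := fun j hj => (hf j hj).elim Eq.ge hc.trans
  exact Or.inr (((hf i hi).resolve_left hfi).trans (Finset.single_le_sum hnonneg hi))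

section Transition

variable {S : Type*} [Fintype S] [DecidableEq S] {K : ℕ}

lemma armMatrix_pow_apply_eq_zero_or_le {ε : ℝ} {d : ℕ} {P₁ P₂ : Matrix S S ℝ}
    (hP₁ : ∀ i j, 0 ≤ P₁ i j) (hP₂ : ∀ i j, 0 ≤ P₂ i j)
    (hP₁bd : ∀ i j, 0 < (P₁ ^ d) i j → ε ≤ (P₁ ^ d) i j)
    (hP₂bd : ∀ i j, 0 < (P₂ ^ d) i j → ε ≤ (P₂ ^ d) i j) (h a : Fin K) (i j : S) :
    (armMatrix h P₁ P₂ a ^ d) i j = 0 ∨ ε ≤ (armMatrix h P₁ P₂ a ^ d) i j := by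
  unfold armMatrix
  split_ifs
  · exact (pow_apply_nonneg hP₁ d i j).eq_or_lt.imp Eq.symm (hP₁bd i j)
  · exact (pow_apply_nonneg hP₂ d i j).eq_or_lt.imp Eq.symm (hP₂bd i j)

theorem transition_prob_zero_or_bounded_below_general
    {η ε : ℝ} (hη : η ∈ Set.Icc (0 : ℝ) 1) (hε : 0 ≤ ε) {PC : Fin K → Matrix S S ℝ}
    {db : Fin K → ℕ} {ib ib' : Fin K → S}
    (hPC : ∀ a, (PC a ^ db a) (ib a) (ib' a) = 0 ∨ ε ≤ (PC a ^ db a) (ib a) (ib' a))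
    (b : Fin K) (db' : Fin K → ℕ) :
    Qtrans η PC db ib b db' ib' = 0 ∨ η / K * ε ≤ Qtrans η PC db ib b db' ib' := by
  have hηK : 0 ≤ η / K := div_nonneg hη.1 K.cast_nonneg
  refine sum_eq_zero_or_le (mul_nonneg hηK hε) fun a _ => ?_
  have hweight : η / K ≤ η / K + (1 - η) * (if a = b then 1 else 0) :=
    le_add_of_nonneg_right (mul_nonneg (sub_nonneg.2 hη.2) (by positivity))
  have hweight_entry := mul_eq_zero_or_le hηK hε (Or.inr hweight) (hPC a)
  exact mul_ite_one_zero_eq_zero_or_le (mul_ite_one_zero_eq_zero_or_le hweight_entry)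

end Transition

/-- If every nonzero entry of every power of `P₁` and of `P₂` is at least
`ε* ∈ (0,1)`, then every transition probability of the controlled Markov process is either
`0` or at least `(η/K)·ε*`. -/
theorem transition_prob_zero_or_bounded_below {S : Type*} [Fintype S] [DecidableEq S]
    [Nonempty S]
    (K : ℕ) (hK : 3 ≤ K) (η : ℝ) (hη : η ∈ Set.Ioc (0 : ℝ) 1)
    (εstar : ℝ) (hεstar : εstar ∈ Set.Ioo (0 : ℝ) 1)
    (h : Fin K) (P₁ P₂ : Matrix S S ℝ)
    (hP₁ : RowStochastic P₁) (hP₂ : RowStochastic P₂) (hne : P₁ ≠ P₂)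
    (hP₁bd : ∀ d : ℕ, 1 ≤ d → ∀ i j, 0 < (P₁ ^ d) i j → εstar ≤ (P₁ ^ d) i j)
    (hP₂bd : ∀ d : ℕ, 1 ≤ d → ∀ i j, 0 < (P₂ ^ d) i j → εstar ≤ (P₂ ^ d) i j)
    (db db' : Fin K → ℕ) (ib ib' : Fin K → S)
    (hdb : ∀ a, 1 ≤ db a) (hdb' : ∀ a, 1 ≤ db' a)
    (b : Fin K) :
    Qtrans η (armMatrix h P₁ P₂) db ib b db' ib' = 0 ∨
      (η / K) * εstar ≤ Qtrans η (armMatrix h P₁ P₂) db ib b db' ib' :=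
  transition_prob_zero_or_bounded_below_general ⟨hη.1.le, hη.2⟩ hεstar.1.le
    (fun a => armMatrix_pow_apply_eq_zero_or_le hP₁.1 hP₂.1 (hP₁bd _ (hdb a)) (hP₂bd _ (hdb a))
      h a _ _) b db'
end
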